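/- arXiv:1812.01143 — 2 statements merged into one kernel-verified Lean document; each statement's English description precedes it below -/
import Mathlib

section
/- The right eigenvectors of the Bernoulli–Laplace transition matrix are orthogonal with respect to the weights 1/π_i: for all k ≠ l in {0,...,N_w}, Σ_{i=0}^{N_w} c_k(i)·c_l(i)/π_i = 0. -/
/-!
Let `b = N2 - Nw ≥ 0`. The generating function of `c_k` is `F = (1 - x)^k f`, where
`f = ₂F₁(k - N1, k - Nw; b + 1; x)`. Combining the hypergeometric equation for `f` with
`(1 - x) G' = -k G` for `G = (1 - x)^k` gives the second order equation
`(1 - x) (θ(θ + b)F / x - (θ - N1)(θ - Nw)F) = -k (N + 1 - k) F`, `θ = x d/dx`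
(`ode_one_sub_pow_mul`). On coefficients it says that the flux
`J_n = (n + 1)(b + n + 1) c_(n+1) - (N1 - n)(Nw - n) c_n` satisfies
`J_n - J_(n-1) = -μ_k c_n` with `μ_k = k (N + 1 - k)`: this is the eigenvector equation of the
birth-death chain.

Detailed balance `(n + 1)(b + n + 1) π_(n+1) = (N1 - n)(Nw - n) π_n` makes the operator symmetric for
the weights `1 / π`. Summation by parts turns `(μ_l - μ_k) ∑ c_k c_l / π` into the boundary term
`(J_k c_l - J_l c_k) / π` at `Nw` (`sum_eq_boundary`). It vanishes because `c_k (Nw + 1) = 0`: the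
generating function is a polynomial of degree at most `Nw`. Finally `μ_k ≠ μ_l`, since
`μ_k - μ_l = (k - l)(N + 1 - k - l)` and `k + l ≤ 2 Nw ≤ N`.
-/


open Finset

noncomputable section

/-- Rising factorial (Pochhammer symbol) `a (a+1) ⋯ (a+m-1)` in `ℚ`. -/
def rfQ (a : ℚ) : ℕ → ℚ
  | 0 => 1
  | m + 1 => rfQ a m * (a + m)

/-- Components `c_k(i)` of the `k`-th right eigenvector of the BL transition matrix. -/
def cBL (N1 N2 Nw : ℕ) (k i : ℕ) : ℝ :=
  ((∑ n ∈ Finset.range (min k i + 1),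
    (Nat.choose k n : ℚ) * (-1) ^ n
      * rfQ ((k : ℚ) - N1) (i - n) * rfQ ((k : ℚ) - Nw) (i - n)
      / (rfQ ((N2 : ℚ) - Nw + 1) (i - n) * (Nat.factorial (i - n) : ℚ)) : ℚ) : ℝ)

/-- Up-transition probability `p_j` of the BL model. -/
def pBL (N1 N2 Nw : ℕ) (j : ℕ) : ℝ :=
  ((N1 : ℝ) - j) * ((Nw : ℝ) - j) / ((N1 : ℝ) * N2)

/-- Down-transition probability `q_j` of the BL model. -/
def qBL (N1 N2 Nb : ℕ) (j : ℕ) : ℝ :=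
  (j : ℝ) * ((Nb : ℝ) - N1 + j) / ((N1 : ℝ) * N2)

/-- The Bernoulli–Laplace transition matrix `T`. -/
def TBL (N1 N2 Nw Nb : ℕ) : Matrix (Fin (Nw + 1)) (Fin (Nw + 1)) ℝ :=
  fun i j =>
    if (i : ℕ) = (j : ℕ) + 1 then pBL N1 N2 Nw j
    else if (i : ℕ) + 1 = (j : ℕ) then qBL N1 N2 Nb j
    else if (i : ℕ) = (j : ℕ) then 1 - pBL N1 N2 Nw j - qBL N1 N2 Nb j
    else 0

/-- Eigenvalue `λ_k = 1 - k (N+1-k) / (N1 N2)`. -/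
def lamBL (N1 N2 N : ℕ) (k : ℕ) : ℝ :=
  1 - (k : ℝ) * ((N : ℝ) + 1 - k) / ((N1 : ℝ) * N2)

/-- The hypergeometric stationary distribution `π_i = C(Nw,i) C(N-Nw,N1-i) / C(N,N1)`. -/
def piBL (N1 Nw N : ℕ) (i : ℕ) : ℝ :=
  (Nat.choose Nw i : ℝ) * (Nat.choose (N - Nw) (N1 - i) : ℝ) / (Nat.choose N N1 : ℝ)

/-- The orthogonal measure `Δ_k² = (Σ_i c_k(i)²/π_i)⁻¹`. -/
def DeltaSqBL (N1 N2 Nw N : ℕ) (k : ℕ) : ℝ :=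
  (∑ i ∈ Finset.range (Nw + 1), (cBL N1 N2 Nw k i) ^ 2 / piBL N1 Nw N i)⁻¹

/-- `Δ_k > 0`, the positive square root of `Δ_k²`. -/
def DeltaBL (N1 N2 Nw N : ℕ) (k : ℕ) : ℝ :=
  Real.sqrt (DeltaSqBL N1 N2 Nw N k)

/-- Right eigenvectors of the symmetrized matrix: `v_k(i) = Δ_k c_k(i) / π_i`. -/
def vBL (N1 N2 Nw N : ℕ) (k i : ℕ) : ℝ :=
  DeltaBL N1 N2 Nw N k * cBL N1 N2 Nw k i / piBL N1 Nw N i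

/-- Orthonormal eigenvectors of the symmetrized matrix: `w_k(i) = Δ_k c_k(i) / √(π_i)`. -/
def wBL (N1 N2 Nw N : ℕ) (k i : ℕ) : ℝ :=
  DeltaBL N1 N2 Nw N k * cBL N1 N2 Nw k i / Real.sqrt (piBL N1 Nw N i)

open PowerSeries in
lemma coeff_X_mul_derivative (h : ℚ⟦X⟧) (n : ℕ) :
    coeff n (X * d⁄dX ℚ h) = n * coeff n h := by
  cases n with
  | zero => simp
  | succ m => rw [coeff_succ_X_mul, coeff_derivative]; push_cast; ring

open PowerSeries in
/-- If `f` has hypergeometric coefficients with parameters `k - s`, `k - w`, `b + 1`, and `G`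
satisfies the equation of `(1 - X)^k`, then `G * f` solves the generating-function form of the
eigenvector equation. -/
lemma ode_one_sub_pow_mul (k s w b : ℚ) (f G : ℚ⟦X⟧)
    (hf : ∀ n : ℕ, ((n : ℚ) + 1) * (n + 1 + b) * coeff (n + 1) f
      = (n + (k - s)) * (n + (k - w)) * coeff n f)
    (hG : ∀ n : ℕ, ((n : ℚ) + 1) * coeff (n + 1) G = (n - k) * coeff n G) :
    (1 - X) * ((X * d⁄dX ℚ (d⁄dX ℚ (G * f)) + C (1 + b) * d⁄dX ℚ (G * f))
      - (X * d⁄dX ℚ (X * d⁄dX ℚ (G * f)) - C (s + w) * (X * d⁄dX ℚ (G * f)) + C (s * w) * (G * f)))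
      = - C (k * (s + w + b + 1 - k)) * (G * f) := by
  have e1 : (1 - X) * d⁄dX ℚ G = - C k * G := by
    ext n
    have := hG n
    rw [sub_mul, one_mul, map_sub, coeff_X_mul_derivative, coeff_derivative, neg_mul, map_neg, coeff_C_mul]
    linear_combination this
  have e2 : (1 - X) ^ 2 * d⁄dX ℚ (d⁄dX ℚ G) = C k * (C k - 1) * G := by
    have h := congrArg (d⁄dX ℚ) e1
    simp only [Derivation.leibniz, map_sub, derivative_X, derivative_one, map_neg, derivative_C,
      smul_eq_mul] at h
    linear_combination (1 - X) * h + (1 - C k) * e1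
  have ef : X * d⁄dX ℚ (d⁄dX ℚ f) + C (1 + b) * d⁄dX ℚ f
      = X * d⁄dX ℚ (X * d⁄dX ℚ f) + C (k - s + (k - w)) * (X * d⁄dX ℚ f)
        + C ((k - s) * (k - w)) * f := by
    ext n
    have := hf n
    simp only [LinearMap.map_add, coeff_X_mul_derivative, coeff_C_mul, coeff_derivative]
    linear_combination this
  simp only [Derivation.leibniz, map_add, map_sub, map_mul, derivative_X, map_one,
    smul_eq_mul] at ef ⊢
  linear_combination (1 - X) * G * ef + 2 * X * (1 - X) * d⁄dX ℚ f * e1 + X * f * e2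
    + (1 + C b - (1 - C s - C w) * X) * f * e1

/-- `c_k(i)` as a rational number. -/
def cBLQ (N1 N2 Nw k i : ℕ) : ℚ :=
  ∑ n ∈ Finset.range (min k i + 1),
    (Nat.choose k n : ℚ) * (-1) ^ n
      * rfQ ((k : ℚ) - N1) (i - n) * rfQ ((k : ℚ) - Nw) (i - n)
      / (rfQ ((N2 : ℚ) - Nw + 1) (i - n) * (Nat.factorial (i - n) : ℚ))

lemma rfQ_pos {a : ℚ} (ha : 0 < a) (m : ℕ) : 0 < rfQ a m := by
  induction m with
  | zero => simp [rfQ]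
  | succ m ih => rw [rfQ]; positivity

lemma rfQ_eq_zero (k w m : ℕ) (hk : k ≤ w) (hm : w < k + m) : rfQ ((k : ℚ) - w) m = 0 := by
  induction m with
  | zero => omega
  | succ m ih =>
    rw [rfQ]
    rcases Nat.lt_or_ge w (k + m) with h | h
    · rw [ih h, zero_mul]
    · have : w = k + m := by omega
      subst this
      push_cast
      ring

/-- The generating function has degree at most `Nw`; only the first coefficient beyond is needed. -/
lemma cBLQ_top (N1 N2 Nw k : ℕ) (hk : k ≤ Nw) : cBLQ N1 N2 Nw k (Nw + 1) = 0 := by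
  refine Finset.sum_eq_zero fun n hn => ?_
  have hn' := Finset.mem_range.1 hn
  rw [rfQ_eq_zero k Nw (Nw + 1 - n) hk (by omega)]
  simp

/-- The flux `J_n` of the sequence `c` across the edge from `n` to `n + 1`. -/
def flux {K : Type*} [Field K] (s w b : K) (c : ℕ → K) (n : ℕ) : K :=
  (n + 1) * (n + 1 + b) * c (n + 1) - (s - n) * (w - n) * c n

open PowerSeries in
/-- The eigenvector equation `J_n - J_(n-1) = -μ_k c_n`, with `J_(-1) = 0`. -/
lemma flux_cBLQ (N1 N2 Nw k : ℕ) (hw2 : Nw ≤ N2) :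
    flux (N1 : ℚ) Nw (N2 - Nw) (cBLQ N1 N2 Nw k) 0
      = - ((k : ℚ) * (N1 + N2 + 1 - k)) * cBLQ N1 N2 Nw k 0 ∧
    ∀ n, flux (N1 : ℚ) Nw (N2 - Nw) (cBLQ N1 N2 Nw k) (n + 1)
        - flux (N1 : ℚ) Nw (N2 - Nw) (cBLQ N1 N2 Nw k) n
      = - ((k : ℚ) * (N1 + N2 + 1 - k)) * cBLQ N1 N2 Nw k (n + 1) := by
  have hb : (0 : ℚ) ≤ (N2 : ℚ) - Nw := sub_nonneg.2 (by exact_mod_cast hw2)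
  set b : ℚ := (N2 : ℚ) - Nw with hbdef
  set f : ℚ⟦X⟧ := mk fun m => rfQ ((k : ℚ) - N1) m * rfQ ((k : ℚ) - Nw) m
    / (rfQ (b + 1) m * (Nat.factorial m : ℚ)) with hfdef
  set G : ℚ⟦X⟧ := mk fun n => (Nat.choose k n : ℚ) * (-1) ^ n with hGdef
  have hc : ∀ i, coeff i (G * f) = cBLQ N1 N2 Nw k i := by
    intro i
    rw [coeff_mul, Finset.Nat.sum_antidiagonal_eq_sum_range_succ
      (fun p q => coeff p G * coeff q f), cBLQ]
    symm
    refine Finset.sum_subset_zero_on_sdiff ?_ ?_ ?_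
    · exact Finset.range_mono (by omega)
    · intro n hn
      simp only [Finset.mem_sdiff, Finset.mem_range] at hn
      rw [hGdef, coeff_mk, Nat.choose_eq_zero_of_lt (by omega)]
      simp
    · intro n _
      rw [hGdef, hfdef, coeff_mk, coeff_mk]
      ring
  have hf : ∀ n : ℕ, ((n : ℚ) + 1) * (n + 1 + b) * coeff (n + 1) f
      = (n + ((k : ℚ) - N1)) * (n + ((k : ℚ) - Nw)) * coeff n f := by
    intro n
    have h1 := (rfQ_pos (show (0 : ℚ) < b + 1 by linarith) n).ne'
    have h2 : (n.factorial : ℚ) ≠ 0 := by positivity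
    have h3 : b + 1 + n ≠ 0 := by positivity
    rw [hfdef, coeff_mk, coeff_mk, rfQ, rfQ, rfQ, Nat.factorial_succ]
    push_cast
    field_simp
    ring
  have hG : ∀ n : ℕ, ((n : ℚ) + 1) * coeff (n + 1) G = (n - k) * coeff n G := by
    intro n
    rw [hGdef, coeff_mk, coeff_mk]
    rcases le_or_gt n k with h | h
    · have := congrArg (Nat.cast (R := ℚ)) (Nat.choose_succ_right_eq k n)
      push_cast [Nat.cast_sub h] at this
      rw [pow_succ]
      linear_combination -(-1) ^ n * this
    · rw [Nat.choose_eq_zero_of_lt h, Nat.choose_eq_zero_of_lt (by omega)]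
      simp
  have key := ode_one_sub_pow_mul k N1 Nw b f G hf hG
  set F := G * f
  set U := (X * d⁄dX ℚ (d⁄dX ℚ F) + C (1 + b) * d⁄dX ℚ F)
      - (X * d⁄dX ℚ (X * d⁄dX ℚ F) - C ((N1 : ℚ) + Nw) * (X * d⁄dX ℚ F)
        + C ((N1 : ℚ) * Nw) * F) with hU
  have hUc : ∀ n, coeff n U = flux (N1 : ℚ) Nw b (cBLQ N1 N2 Nw k) n := by
    intro n
    rw [hU]
    simp only [LinearMap.map_sub, LinearMap.map_add, coeff_X_mul_derivative, coeff_C_mul,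
      coeff_derivative, hc]
    rw [flux]
    ring
  rw [sub_mul, one_mul] at key
  constructor
  · have h := congrArg (coeff 0) key
    rw [map_sub, coeff_zero_X_mul, hUc, neg_mul, map_neg, coeff_C_mul, hc] at h
    rw [hbdef] at h ⊢
    linear_combination h
  · intro n
    have h := congrArg (coeff (n + 1)) key
    rw [map_sub, coeff_succ_X_mul, hUc, hUc, neg_mul, map_neg, coeff_C_mul, hc] at h
    rw [hbdef] at h ⊢
    linear_combination h

/-- Summation by parts: for eigenvectors `c`, `d` of a birth-death operator in detailed balance with
`p`, the weighted inner product reduces to a boundary term. -/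
lemma sum_eq_boundary (s w b μ ν : ℝ) (c d p : ℕ → ℝ) (M : ℕ)
    (hp : ∀ n ≤ M, p n ≠ 0)
    (hbal : ∀ n < M, ((n : ℝ) + 1) * (n + 1 + b) * p (n + 1) = (s - n) * (w - n) * p n)
    (hc0 : flux s w b c 0 = -μ * c 0) (hd0 : flux s w b d 0 = -ν * d 0)
    (hc : ∀ n, flux s w b c (n + 1) - flux s w b c n = -μ * c (n + 1))
    (hd : ∀ n, flux s w b d (n + 1) - flux s w b d n = -ν * d (n + 1)) :
    (ν - μ) * ∑ i ∈ Finset.range (M + 1), c i * d i / p i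
      = (flux s w b c M * d M - flux s w b d M * c M) / p M := by
  induction M with
  | zero =>
    rw [Finset.sum_range_one, hc0, hd0]
    ring
  | succ M ih =>
    rw [Finset.sum_range_succ, mul_add, ih (fun n hn => hp n (by omega))
      (fun n hn => hbal n (by omega))]
    have h1 := hp M (by omega)
    have h2 := hp (M + 1) le_rfl
    have h3 := hbal M (by omega)
    have ec : flux s w b c (M + 1) = flux s w b c M - μ * c (M + 1) := by
      linear_combination hc M
    have ed : flux s w b d (M + 1) = flux s w b d M - ν * d (M + 1) := by
      linear_combination hd M
    -- Detailed balance expresses the same boundary term at either end of the edge `M`, `M + 1`.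
    have e : (flux s w b c M * d M - flux s w b d M * c M) / p M
        = (flux s w b c M * d (M + 1) - flux s w b d M * c (M + 1)) / p (M + 1) := by
      rw [div_eq_div_iff h1 h2]
      simp only [flux]
      linear_combination (c (M + 1) * d M - d (M + 1) * c M) * h3
    rw [e, ec, ed]
    ring

lemma flux_cast (s w b : ℚ) (c : ℕ → ℚ) (n : ℕ) :
    flux (s : ℝ) w b (fun i => (c i : ℝ)) n = ((flux s w b c n : ℚ) : ℝ) := by
  simp [flux]

lemma piBL_pos (N1 N2 Nw n : ℕ) (hw2 : Nw ≤ N2) (hn : n ≤ Nw) :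
    0 < piBL N1 Nw (N1 + N2) n := by
  have h1 := Nat.choose_pos hn
  have h2 := Nat.choose_pos (show N1 - n ≤ N1 + N2 - Nw by omega)
  have h3 := Nat.choose_pos (show N1 ≤ N1 + N2 by omega)
  unfold piBL
  positivity

/-- Detailed balance. -/
lemma piBL_balance (N1 N2 Nw n : ℕ) (hw1 : Nw ≤ N1) (hw2 : Nw ≤ N2) (hn : n < Nw) :
    ((n : ℝ) + 1) * (n + 1 + ((N2 : ℝ) - Nw)) * piBL N1 Nw (N1 + N2) (n + 1)
      = ((N1 : ℝ) - n) * (Nw - n) * piBL N1 Nw (N1 + N2) n := by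
  obtain ⟨m, hm⟩ : ∃ m, N1 = n + 1 + m := ⟨N1 - (n + 1), by omega⟩
  have h1 := congrArg (Nat.cast (R := ℝ)) (Nat.choose_succ_right_eq Nw n)
  have h2 := congrArg (Nat.cast (R := ℝ)) (Nat.choose_succ_right_eq (N1 + N2 - Nw) m)
  push_cast [Nat.cast_sub hn.le] at h1
  rw [Nat.cast_mul, Nat.cast_mul, Nat.cast_sub (show m ≤ N1 + N2 - Nw by omega),
    Nat.cast_sub (show Nw ≤ N1 + N2 by omega)] at h2
  have hm' : (N1 : ℝ) = n + 1 + m := by rw [hm]; push_cast; ring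
  unfold piBL
  rw [show N1 - (n + 1) = m by omega, show N1 - n = m + 1 by omega]
  push_cast at h2
  set A := ((N1 + N2 - Nw).choose m : ℝ)
  set B := ((N1 + N2 - Nw).choose (m + 1) : ℝ)
  rw [hm'] at h2 ⊢
  rw [mul_div_assoc', mul_div_assoc']
  congr 1
  linear_combination (n + 1 + ((N2 : ℝ) - Nw)) * A * h1 - (Nw.choose n : ℝ) * (Nw - n) * h2

/-- Orthogonality of the right eigenvectors with respect to the weights `1/π_i`. -/
theorem BL_right_eigenvectors_orthogonal
    (N1 N2 Nw Nb N : ℕ)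
    (hN1 : 1 ≤ N1) (hN2 : 1 ≤ N2) (hN : N = N1 + N2) (hwb : Nw + Nb = N)
    (hw1 : Nw ≤ N1) (hw2 : Nw ≤ N2)
    (k l : ℕ) (hk : k ≤ Nw) (hl : l ≤ Nw) (hkl : k ≠ l) :
    ∑ i ∈ Finset.range (Nw + 1),
        cBL N1 N2 Nw k i * cBL N1 N2 Nw l i / piBL N1 Nw N i = 0 := by
  subst hN
  have hcast : ∀ k i, cBL N1 N2 Nw k i = ((cBLQ N1 N2 Nw k i : ℚ) : ℝ) := fun _ _ => rfl
  have hF : ∀ k n, flux (N1 : ℝ) Nw ((N2 : ℝ) - Nw) (cBL N1 N2 Nw k) n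
      = ((flux (N1 : ℚ) Nw (N2 - Nw) (cBLQ N1 N2 Nw k) n : ℚ) : ℝ) := by
    intro k n
    rw [← flux_cast]
    push_cast
    rfl
  have h0 : ∀ k : ℕ, flux (N1 : ℝ) Nw ((N2 : ℝ) - Nw) (cBL N1 N2 Nw k) 0
      = -((k : ℝ) * (N1 + N2 + 1 - k)) * cBL N1 N2 Nw k 0 := by
    intro k
    rw [hF, hcast, (flux_cBLQ N1 N2 Nw k hw2).1]
    push_cast
    rfl
  have h1 : ∀ k n : ℕ, flux (N1 : ℝ) Nw ((N2 : ℝ) - Nw) (cBL N1 N2 Nw k) (n + 1)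
      - flux (N1 : ℝ) Nw ((N2 : ℝ) - Nw) (cBL N1 N2 Nw k) n
      = -((k : ℝ) * (N1 + N2 + 1 - k)) * cBL N1 N2 Nw k (n + 1) := by
    intro k n
    rw [hF, hF, hcast, ← Rat.cast_sub, (flux_cBLQ N1 N2 Nw k hw2).2 n]
    push_cast
    rfl
  have htop : ∀ k ≤ Nw, flux (N1 : ℝ) Nw ((N2 : ℝ) - Nw) (cBL N1 N2 Nw k) Nw = 0 := by
    intro k hk
    rw [flux, hcast k (Nw + 1), cBLQ_top N1 N2 Nw k hk]
    simp
  have key := sum_eq_boundary N1 Nw ((N2 : ℝ) - Nw) _ _ (cBL N1 N2 Nw k) (cBL N1 N2 Nw l)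
    (piBL N1 Nw (N1 + N2)) Nw (fun n hn => (piBL_pos N1 N2 Nw n hw2 hn).ne')
    (fun n hn => piBL_balance N1 N2 Nw n hw1 hw2 hn) (h0 k) (h0 l) (h1 k) (h1 l)
  rw [htop k hk, htop l hl] at key
  simp only [zero_mul, sub_zero, zero_div] at key
  refine (mul_eq_zero.1 key).resolve_left ?_
  have hkl' : (l : ℝ) - k ≠ 0 := sub_ne_zero.2 (by exact_mod_cast hkl.symm)
  have hsum : (k : ℝ) + l ≤ N1 + N2 := by exact_mod_cast (show k + l ≤ N1 + N2 by omega)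
  have hpos : (N1 : ℝ) + N2 + 1 - k - l ≠ 0 := by linarith
  intro h
  apply mul_ne_zero hkl' hpos
  linear_combination h
end
end

section
/- Spectral decomposition of the Bernoulli–Laplace chain: define Δ_k² = (Σ_{i=0}^{N_w} c_k(i)²/π_i)^{−1} (a positive real number, since each c_k is a nonzero vector and each π_i > 0). Then for every natural number m and all i, j ∈ {0,...,N_w}: (T^m)_{ij} = (1/π_j)·Σ_{k=0}^{N_w} Δ_k²·λ_k^m·c_k(i)·c_k(j), where λ_k = 1 − k(N+1−k)/(N1·N2). -/
/-!
Put `a = k - N1`, `b = k - Nw`, `c = N2 - Nw + 1`. The numbers `c_k(i)` are the coefficients of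
`G = (1 - X)^k · ₂F₁(a, b; c; X)`. Gauss's hypergeometric equation for `₂F₁` turns into a second
order equation for `G` (`ode_genFun`), which coefficientwise is the three-term recurrence
`T c_k = λ_k c_k` (`TBL_mul_eigMat`); at the boundary row `i = Nw` one needs `c_k(Nw + 1) = 0`,
which holds because `G` is a polynomial of degree at most `Nw`.

The chain is reversible (`TBL_reversible`), so `T` is self-adjoint for the inner product
`⟨u, v⟩ = ∑ i, u i * v i / π i`. As `k ↦ k (N + 1 - k)` is injective on `{0, …, Nw}`
(because `2 Nw ≤ N`), the eigenvalues are distinct and the `c_k` are orthogonal. With `M` the matrix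
whose columns are the `c_k` and `D = diag (1/π)`, this says `diag (Δ²) Mᵀ D M = 1`, hence
`M diag (Δ²) Mᵀ D = 1`, and `T^m = T^m M diag (Δ²) Mᵀ D = M diag (λ^m) diag (Δ²) Mᵀ D`.
-/

open Finset

noncomputable section

/-! ### The hypergeometric equation and the generating function -/

open PowerSeries in
/-- The Gauss hypergeometric series `₂F₁(a, b; c; X)` over `ℚ`. The junk value `x / 0 = 0` intervenes
only if `c` is a nonpositive integer. -/
def hypSeries (a b c : ℚ) : PowerSeries ℚ :=
  PowerSeries.mk fun m => rfQ a m * rfQ b m / (rfQ c m * (Nat.factorial m : ℚ))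

lemma rfQ_pos_s8 {c : ℚ} (hc : 0 < c) (m : ℕ) : 0 < rfQ c m := by
  induction m with
  | zero => simp [rfQ]
  | succ m ih => simp only [rfQ]; positivity

lemma rfQ_neg_eq_zero (d m : ℕ) (h : d < m) : rfQ (-(d : ℚ)) m = 0 := by
  induction m with
  | zero => omega
  | succ m ih =>
    simp only [rfQ]
    rcases Nat.lt_or_ge d m with h' | h'
    · rw [ih h', zero_mul]
    · obtain rfl : d = m := by omega
      simp

lemma hypSeries_coeff_succ {a b c : ℚ} (hc : 0 < c) (m : ℕ) :
    (m + 1) * (c + m) * PowerSeries.coeff (m + 1) (hypSeries a b c)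
      = (a + m) * (b + m) * PowerSeries.coeff m (hypSeries a b c) := by
  have h1 := (rfQ_pos_s8 hc m).ne'
  have h2 : (Nat.factorial m : ℚ) ≠ 0 := by positivity
  have h3 : c + m ≠ 0 := by positivity
  simp only [hypSeries, PowerSeries.coeff_mk, rfQ, Nat.factorial_succ]
  push_cast
  field_simp

open PowerSeries in
/-- Coefficients of `X² F''`. -/
lemma coeff_X_X_deriv_deriv (F : PowerSeries ℚ) (m : ℕ) :
    coeff m (X * (X * derivative ℚ (derivative ℚ F))) = m * (m - 1) * coeff m F := by
  rcases m with _ | _ | m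
  · simp
  · simp [coeff_succ_X_mul]
  · simp only [coeff_succ_X_mul, coeff_derivative]
    push_cast
    ring

open PowerSeries in
/-- Coefficients of `X F'`. -/
lemma coeff_X_deriv (F : PowerSeries ℚ) (m : ℕ) :
    coeff m (X * derivative ℚ F) = m * coeff m F := by
  rcases m with _ | m
  · simp
  · simp only [coeff_succ_X_mul, coeff_derivative]
    push_cast
    ring

open PowerSeries in
/-- Gauss's hypergeometric differential equation. -/
lemma ode_hypSeries {a b c : ℚ} (hc : 0 < c) :
    X * (1 - X) * derivative ℚ (derivative ℚ (hypSeries a b c))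
      + (C c - (C a + C b + 1) * X) * derivative ℚ (hypSeries a b c)
      - C a * C b * hypSeries a b c = 0 := by
  set F := hypSeries a b c with hF
  have e : X * (1 - X) * derivative ℚ (derivative ℚ F)
      + (C c - (C a + C b + 1) * X) * derivative ℚ F - C a * C b * F
      = X * derivative ℚ (derivative ℚ F) - X * (X * derivative ℚ (derivative ℚ F))
        + C c * derivative ℚ F - C (a + b + 1) * (X * derivative ℚ F) - C (a * b) * F := by
    simp only [map_add, map_mul, map_one]
    ring
  rw [e]
  ext m
  have h := hypSeries_coeff_succ (a := a) (b := b) hc m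
  rw [← hF] at h
  simp only [map_sub (coeff m), map_add (coeff m), coeff_C_mul, coeff_X_X_deriv_deriv, coeff_X_deriv,
    coeff_derivative, map_zero]
  linear_combination h

/-- The generating function `(1 - X)^k F`; with `F` hypergeometric its coefficients are `c_k(i)`. -/
def genFun (k : ℕ) (F : PowerSeries ℚ) : PowerSeries ℚ := (1 - PowerSeries.X) ^ k * F

open PowerSeries in
/-- The hypergeometric equation for `F`, rewritten for `G = (1 - X)^k F`; here `n₁, n₂, w` stand for
`N1, N2, Nw`. -/
lemma ode_genFun (k : ℕ) (n₁ n₂ w : ℚ) (hc : 0 < n₂ - w + 1) :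
    let G := genFun k (hypSeries (k - n₁) (k - w) (n₂ - w + 1))
    X * (1 - X) ^ 2 * derivative ℚ (derivative ℚ G)
      + (1 - X) * (C (n₂ - w + 1) + C (n₁ + w - 1) * X) * derivative ℚ G
      + (C (k * (n₁ + n₂ + 1 - k)) - (1 - X) * C (n₁ * w)) * G = 0 := by
  intro G
  have ode := ode_hypSeries (a := k - n₁) (b := k - w) hc
  set F := hypSeries (k - n₁) (k - w) (n₂ - w + 1)
  set V : PowerSeries ℚ := (1 - X) ^ k with hV
  have hG : G = V * F := rfl
  have hU : derivative ℚ (1 - X : PowerSeries ℚ) = -1 := by simp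
  have V1 : (1 - X) * derivative ℚ V = - (k : PowerSeries ℚ) * V := by
    rw [hV, Derivation.leibniz_pow, hU]
    rcases k with _ | k
    · simp
    · simp only [Nat.add_sub_cancel, nsmul_eq_mul, smul_eq_mul]
      ring
  have V2 : (1 - X) * derivative ℚ (derivative ℚ V) = (1 - (k : PowerSeries ℚ)) * derivative ℚ V := by
    have h := congrArg (derivative ℚ) V1
    rw [Derivation.leibniz, Derivation.leibniz, hU] at h
    simp only [smul_eq_mul, map_neg, Derivation.map_natCast] at h
    linear_combination h
  have d1 : derivative ℚ G = V * derivative ℚ F + F * derivative ℚ V := by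
    rw [hG, Derivation.leibniz]; simp only [smul_eq_mul]
  have d2 : derivative ℚ (derivative ℚ G) = V * derivative ℚ (derivative ℚ F)
      + 2 * (derivative ℚ F * derivative ℚ V) + F * derivative ℚ (derivative ℚ V) := by
    rw [d1, map_add, Derivation.leibniz, Derivation.leibniz]; simp only [smul_eq_mul]; ring
  rw [d2, d1, hG]
  simp only [map_sub, map_add, map_mul, map_one, map_natCast] at ode ⊢
  linear_combination V * (1 - X) * ode + X * (1 - X) * F * V2
    + (2 * X * (1 - X) * derivative ℚ F + X * (1 - (k : PowerSeries ℚ)) * F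
      + (C n₂ - C w + 1 + (C n₁ + C w - 1) * X) * F) * V1

/-! ### The coefficients of the generating function and their recurrence -/

open PowerSeries in
lemma genFun_coeff (k i : ℕ) (F : PowerSeries ℚ) :
    coeff i (genFun k F)
      = ∑ n ∈ Finset.range (min k i + 1), (Nat.choose k n : ℚ) * (-1) ^ n * coeff (i - n) F := by
  have e : genFun k F
      = ∑ n ∈ Finset.range (k + 1), C ((Nat.choose k n : ℚ) * (-1) ^ n) * (X ^ n * F) := by
    rw [genFun, show (1 - X : PowerSeries ℚ) = -X + 1 by ring, add_pow, Finset.sum_mul]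
    refine Finset.sum_congr rfl fun n _ => ?_
    rw [neg_pow X n]
    simp only [map_mul, map_pow, map_neg, map_one, map_natCast, one_pow]
    ring
  rw [e, map_sum]
  simp only [coeff_C_mul, coeff_X_pow_mul']
  symm
  refine Finset.sum_subset_zero_on_sdiff ?_ ?_ ?_
  · intro n hn; simp only [Finset.mem_range] at *; omega
  · intro n hn
    simp only [Finset.mem_sdiff, Finset.mem_range] at hn
    rw [if_neg (by omega), mul_zero]
  · intro n hn
    simp only [Finset.mem_range] at hn
    rw [if_pos (by omega)]

lemma cBL_eq_coeff (N1 N2 Nw k i : ℕ) :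
    cBL N1 N2 Nw k i = ((PowerSeries.coeff i
      (genFun k (hypSeries (k - N1) (k - Nw) (N2 - Nw + 1))) : ℚ) : ℝ) := by
  rw [cBL, genFun_coeff]
  simp only [hypSeries, PowerSeries.coeff_mk]
  congr 1
  refine Finset.sum_congr rfl fun n _ => ?_
  ring

lemma cBL_zero (N1 N2 Nw k : ℕ) : cBL N1 N2 Nw k 0 = 1 := by
  simp [cBL, rfQ]

lemma cBL_succ_top (N1 N2 Nw k : ℕ) (hk : k ≤ Nw) : cBL N1 N2 Nw k (Nw + 1) = 0 := by
  rw [cBL, Rat.cast_eq_zero]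
  refine Finset.sum_eq_zero fun n hn => ?_
  simp only [Finset.mem_range] at hn
  have h : rfQ ((k : ℚ) - Nw) (Nw + 1 - n) = 0 := by
    rw [show (k : ℚ) - Nw = -((Nw - k : ℕ) : ℚ) by push_cast [hk]; ring]
    exact rfQ_neg_eq_zero _ _ (by omega)
  rw [h]; simp

open PowerSeries in
/-- The recurrence for `c_k` in rows `i + 1`. -/
lemma cBL_rec (N1 N2 Nw k i : ℕ) (hw2 : Nw ≤ N2) :
    ((N1 : ℝ) - i) * (Nw - i) * cBL N1 N2 Nw k i
      - ((N1 - (i + 1)) * (Nw - (i + 1)) + (i + 1) * (N2 - Nw + (i + 1))) * cBL N1 N2 Nw k (i + 1)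
      + (i + 2) * (N2 - Nw + (i + 2)) * cBL N1 N2 Nw k (i + 2)
      = -(k * (N1 + N2 + 1 - k)) * cBL N1 N2 Nw k (i + 1) := by
  simp only [cBL_eq_coeff]
  have hw2' : (Nw : ℚ) ≤ N2 := by exact_mod_cast hw2
  have ode := ode_genFun k N1 N2 Nw (by linarith)
  set G := genFun k (hypSeries (k - N1) (k - Nw) (N2 - Nw + 1))
  have e : X * (X * (X * derivative ℚ (derivative ℚ G)))
      - C 2 * (X * (X * derivative ℚ (derivative ℚ G))) + X * derivative ℚ (derivative ℚ G)
      + C ((N2 : ℚ) - Nw + 1) * derivative ℚ G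
      + C (N1 + 2 * Nw - N2 - 2 : ℚ) * (X * derivative ℚ G)
      - C (N1 + Nw - 1 : ℚ) * (X * (X * derivative ℚ G))
      + C (k * (N1 + N2 + 1 - k) - N1 * Nw : ℚ) * G + C (N1 * Nw : ℚ) * (X * G) = 0 := by
    simp only [map_sub, map_add, map_mul, map_one, map_natCast, map_ofNat] at ode ⊢
    linear_combination ode
  have h := congrArg (coeff (i + 1)) e
  simp only [map_sub (coeff (i + 1)), map_add (coeff (i + 1)), coeff_C_mul, coeff_X_X_deriv_deriv,
    coeff_X_deriv, coeff_derivative, coeff_succ_X_mul, map_zero] at h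
  push_cast at h
  have h' : (((N1 : ℚ) - i) * (Nw - i) * coeff i G
      - ((N1 - (i + 1)) * (Nw - (i + 1)) + (i + 1) * (N2 - Nw + (i + 1))) * coeff (i + 1) G
      + (i + 2) * (N2 - Nw + (i + 2)) * coeff (i + 2) G)
      = -(k * (N1 + N2 + 1 - k)) * coeff (i + 1) G := by
    linear_combination h
  exact_mod_cast h'

open PowerSeries in
/-- The recurrence for `c_k` in row `0`. -/
lemma cBL_rec_zero (N1 N2 Nw k : ℕ) (hw2 : Nw ≤ N2) :
    - ((N1 : ℝ) * Nw) * cBL N1 N2 Nw k 0 + (N2 - Nw + 1) * cBL N1 N2 Nw k 1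
      = -(k * (N1 + N2 + 1 - k)) * cBL N1 N2 Nw k 0 := by
  simp only [cBL_eq_coeff]
  have hw2' : (Nw : ℚ) ≤ N2 := by exact_mod_cast hw2
  have h := congrArg (coeff 0) (ode_genFun k N1 N2 Nw (by linarith))
  set G := genFun k (hypSeries (k - N1) (k - Nw) (N2 - Nw + 1))
  simp only [coeff_zero_eq_constantCoeff, map_add, map_mul, map_sub, map_pow, constantCoeff_X,
    map_one, constantCoeff_C, map_zero] at h
  have h1 := coeff_derivative G 0
  rw [coeff_zero_eq_constantCoeff] at h1
  norm_num at h1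
  rw [h1] at h
  have h' : - ((N1 : ℚ) * Nw) * coeff 0 G + (N2 - Nw + 1) * coeff 1 G
      = -(k * (N1 + N2 + 1 - k)) * coeff 0 G := by
    rw [coeff_zero_eq_constantCoeff]
    linear_combination h
  exact_mod_cast h'

/-! ### Positivity of the stationary law and reversibility -/

lemma piBL_pos_s8 (N1 N2 Nw Nb N i : ℕ) (hN : N = N1 + N2) (hwb : Nw + Nb = N)
    (hw2 : Nw ≤ N2) (hi : i ≤ Nw) : 0 < piBL N1 Nw N i := by
  have h1 := Nat.choose_pos hi
  have h2 : 0 < Nat.choose (N - Nw) (N1 - i) := Nat.choose_pos (by omega)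
  have h3 : 0 < Nat.choose N N1 := Nat.choose_pos (by omega)
  rw [piBL]
  positivity

/-- Detailed balance between `i` and `i + 1`. -/
lemma detailed_balance (N1 N2 Nw Nb N i : ℕ) (hN : N = N1 + N2) (hwb : Nw + Nb = N)
    (hw1 : Nw ≤ N1) (hw2 : Nw ≤ N2) (hi : i < Nw) :
    pBL N1 N2 Nw i * piBL N1 Nw N i = qBL N1 N2 Nb (i + 1) * piBL N1 Nw N (i + 1) := by
  have e : N - Nw = Nb := by omega
  obtain ⟨s, rfl⟩ : ∃ s, N1 = i + s + 1 := ⟨N1 - i - 1, by omega⟩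
  have a1 := Nat.choose_succ_right_eq Nw i
  have a2 := Nat.choose_succ_right_eq Nb s
  obtain ⟨t, ht⟩ : ∃ t, Nw = i + t := ⟨Nw - i, by omega⟩
  obtain ⟨r, hr⟩ : ∃ r, Nb = s + r := ⟨Nb - s, by omega⟩
  rw [show Nw - i = t by omega] at a1
  rw [show Nb - s = r by omega] at a2
  have a1' : (Nat.choose Nw (i + 1) : ℝ) * (i + 1) = Nat.choose Nw i * t := by exact_mod_cast a1
  have a2' : (Nat.choose Nb (s + 1) : ℝ) * (s + 1) = Nat.choose Nb s * r := by exact_mod_cast a2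
  simp only [pBL, qBL, piBL, e]
  rw [show i + s + 1 - i = s + 1 by omega, show i + s + 1 - (i + 1) = s by omega]
  have hb : (Nb : ℝ) = s + r := by exact_mod_cast hr
  have hw : (Nw : ℝ) = i + t := by exact_mod_cast ht
  have key : ((i + s + 1 : ℕ) - (i : ℝ)) * ((Nw : ℝ) - i)
        * (Nat.choose Nw i * Nat.choose Nb (s + 1))
      = ((i + 1 : ℕ) : ℝ) * ((Nb : ℝ) - (i + s + 1 : ℕ) + (i + 1 : ℕ))
        * (Nat.choose Nw (i + 1) * Nat.choose Nb s) := by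
    push_cast
    rw [hb, hw]
    linear_combination (t : ℝ) * (Nat.choose Nw i) * a2' - (r : ℝ) * (Nat.choose Nb s) * a1'
  rw [div_mul_div_comm, div_mul_div_comm, key]

lemma TBL_reversible (N1 N2 Nw Nb N : ℕ) (hN : N = N1 + N2) (hwb : Nw + Nb = N)
    (hw1 : Nw ≤ N1) (hw2 : Nw ≤ N2) (i j : Fin (Nw + 1)) :
    TBL N1 N2 Nw Nb i j * piBL N1 Nw N j = TBL N1 N2 Nw Nb j i * piBL N1 Nw N i := by
  obtain ⟨i, hi⟩ := i
  obtain ⟨j, hj⟩ := j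
  simp only [TBL]
  rcases lt_trichotomy i j with h | rfl | h
  · by_cases h' : i + 1 = j
    · subst h'
      have := detailed_balance N1 N2 Nw Nb N i hN hwb hw1 hw2 (by omega)
      rw [if_neg (by omega), if_pos rfl, if_pos rfl, this]
    · rw [if_neg (by omega), if_neg (by omega), if_neg (by omega), if_neg (by omega),
        if_neg (by omega), if_neg (by omega)]
      simp
  · rfl
  · by_cases h' : j + 1 = i
    · subst h'
      have := detailed_balance N1 N2 Nw Nb N j hN hwb hw1 hw2 (by omega)
      rw [if_pos rfl, if_neg (by omega), if_pos rfl, this]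
    · rw [if_neg (by omega), if_neg (by omega), if_neg (by omega), if_neg (by omega),
        if_neg (by omega), if_neg (by omega)]
      simp

/-! ### Eigenvectors, eigenvalues and orthogonality -/

/-- The matrix whose `k`-th column is `c_k`. -/
def eigMat (N1 N2 Nw : ℕ) : Matrix (Fin (Nw + 1)) (Fin (Nw + 1)) ℝ :=
  fun i k => cBL N1 N2 Nw k i

/-- A row of `T` applied to a sequence that vanishes at `Nw + 1`. -/
lemma TBL_row_sum (N1 N2 Nw Nb : ℕ) (f : ℕ → ℝ) (hf : f (Nw + 1) = 0) (i : Fin (Nw + 1)) :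
    ∑ j, TBL N1 N2 Nw Nb i j * f j
      = (if (i : ℕ) = 0 then 0 else pBL N1 N2 Nw (i - 1) * f (i - 1))
        + (1 - pBL N1 N2 Nw i - qBL N1 N2 Nb i) * f i + qBL N1 N2 Nb (i + 1) * f (i + 1) := by
  obtain ⟨i, hi⟩ := i
  have split : ∀ j : ℕ, (if i = j + 1 then pBL N1 N2 Nw j
      else if i + 1 = j then qBL N1 N2 Nb j
      else if i = j then 1 - pBL N1 N2 Nw j - qBL N1 N2 Nb j else 0) * f j
      = (if i = j + 1 then pBL N1 N2 Nw j * f j else 0)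
        + (if i = j then (1 - pBL N1 N2 Nw j - qBL N1 N2 Nb j) * f j else 0)
        + (if i + 1 = j then qBL N1 N2 Nb j * f j else 0) := by
    intro j
    split_ifs <;> first | omega | simp
  simp only [TBL]
  rw [Fin.sum_univ_eq_sum_range (fun j : ℕ => (if i = j + 1 then pBL N1 N2 Nw j
      else if i + 1 = j then qBL N1 N2 Nb j
      else if i = j then 1 - pBL N1 N2 Nw j - qBL N1 N2 Nb j else 0) * f j) (Nw + 1)]
  simp only [split, Finset.sum_add_distrib]
  congr 1
  · congr 1
    · rcases i with _ | i
      · simp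
      · simp only [Nat.add_right_cancel_iff, Finset.sum_ite_eq, Finset.mem_range]
        rw [if_pos (by omega)]; simp
    · rw [Finset.sum_ite_eq, if_pos (by simpa using hi)]
  · rw [Finset.sum_ite_eq]
    split_ifs with h
    · rfl
    · simp only [Finset.mem_range] at h
      rw [show i + 1 = Nw + 1 by omega, hf, mul_zero]

/-- `T c_k = λ_k c_k` for all `k`, in matrix form. -/
lemma TBL_mul_eigMat (N1 N2 Nw Nb N : ℕ) (hN1 : 1 ≤ N1) (hN2 : 1 ≤ N2)
    (hN : N = N1 + N2) (hwb : Nw + Nb = N) (hw2 : Nw ≤ N2) :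
    TBL N1 N2 Nw Nb * eigMat N1 N2 Nw
      = eigMat N1 N2 Nw * Matrix.diagonal (fun k : Fin (Nw + 1) => lamBL N1 N2 N k) := by
  ext i k
  rw [Matrix.mul_diagonal, Matrix.mul_apply]
  simp only [eigMat]
  rw [TBL_row_sum _ _ _ _ (fun j => cBL N1 N2 Nw k j) (cBL_succ_top _ _ _ _ (by omega))]
  have h1 : (N1 : ℝ) ≠ 0 := by positivity
  have h2 : (N2 : ℝ) ≠ 0 := by positivity
  have hb : (Nb : ℝ) = N1 + N2 - Nw := by
    have : (Nw : ℝ) + Nb = N1 + N2 := by exact_mod_cast hwb.trans hN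
    linarith
  have hN' : (N : ℝ) = N1 + N2 := by exact_mod_cast hN
  obtain ⟨i, hi⟩ := i
  simp only [pBL, qBL, lamBL, hb, hN']
  rcases i with _ | i
  · have h := cBL_rec_zero N1 N2 Nw k hw2
    simp only [if_true]
    push_cast
    field_simp
    linear_combination h
  · have h := cBL_rec N1 N2 Nw k i hw2
    rw [if_neg (by omega)]
    simp only [Nat.add_sub_cancel]
    push_cast
    field_simp
    rw [show i + 1 + 1 = i + 2 by rfl]
    linear_combination h

lemma lamBL_injective (N1 N2 Nw N k l : ℕ) (hN1 : 1 ≤ N1) (hN2 : 1 ≤ N2) (hN : N = N1 + N2)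
    (hw1 : Nw ≤ N1) (hw2 : Nw ≤ N2) (hk : k ≤ Nw) (hl : l ≤ Nw)
    (h : lamBL N1 N2 N k = lamBL N1 N2 N l) : k = l := by
  have h1 : (N1 : ℝ) ≠ 0 := by positivity
  have h2 : (N2 : ℝ) ≠ 0 := by positivity
  simp only [lamBL] at h
  field_simp at h
  have h3 : ((k : ℝ) - l) * (N + 1 - k - l) = 0 := by linear_combination -h
  have h4 : (k : ℝ) + l ≤ N := by exact_mod_cast (by omega : k + l ≤ N)
  rcases mul_eq_zero.mp h3 with h5 | h5
  · exact_mod_cast sub_eq_zero.mp h5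
  · linarith

/-- Orthogonality of the `c_k` for the weight `1/π`, with squared norms `1/Δ_k²`. -/
lemma eigMat_orthogonal (N1 N2 Nw Nb N : ℕ) (hN1 : 1 ≤ N1) (hN2 : 1 ≤ N2)
    (hN : N = N1 + N2) (hwb : Nw + Nb = N) (hw1 : Nw ≤ N1) (hw2 : Nw ≤ N2) :
    Matrix.diagonal (fun k : Fin (Nw + 1) => DeltaSqBL N1 N2 Nw N k)
      * ((eigMat N1 N2 Nw).transpose
        * Matrix.diagonal (fun i : Fin (Nw + 1) => 1 / piBL N1 Nw N i) * eigMat N1 N2 Nw) = 1 := by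
  have hpi : ∀ i : Fin (Nw + 1), 0 < piBL N1 Nw N i := fun i =>
    piBL_pos_s8 N1 N2 Nw Nb N i hN hwb hw2 (by omega)
  set M := eigMat N1 N2 Nw with hM
  set D := Matrix.diagonal (fun i : Fin (Nw + 1) => 1 / piBL N1 Nw N i) with hD
  set L := Matrix.diagonal (fun k : Fin (Nw + 1) => lamBL N1 N2 N k) with hL
  have hTM := TBL_mul_eigMat N1 N2 Nw Nb N hN1 hN2 hN hwb hw2
  rw [← hM, ← hL] at hTM
  have hDT : (TBL N1 N2 Nw Nb).transpose * D = D * TBL N1 N2 Nw Nb := by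
    ext i j
    rw [hD, Matrix.mul_diagonal, Matrix.diagonal_mul, Matrix.transpose_apply]
    have := TBL_reversible N1 N2 Nw Nb N hN hwb hw1 hw2 i j
    have h1 := (hpi i).ne'
    have h2 := (hpi j).ne'
    field_simp
    linear_combination -this
  -- the Gram matrix commutes with the diagonal matrix of eigenvalues
  have comm : L * (M.transpose * D * M) = (M.transpose * D * M) * L := by
    have hTM' : L * M.transpose = M.transpose * (TBL N1 N2 Nw Nb).transpose := by
      rw [← Matrix.transpose_mul, hTM, Matrix.transpose_mul, hL, Matrix.diagonal_transpose]
    calc L * (M.transpose * D * M) = (L * M.transpose) * D * M := by simp only [Matrix.mul_assoc]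
      _ = M.transpose * ((TBL N1 N2 Nw Nb).transpose * D) * M := by
        rw [hTM']; simp only [Matrix.mul_assoc]
      _ = M.transpose * D * (TBL N1 N2 Nw Nb * M) := by rw [hDT]; simp only [Matrix.mul_assoc]
      _ = _ := by rw [hTM]; simp only [Matrix.mul_assoc]
  ext k l
  rw [Matrix.diagonal_mul]
  by_cases hkl : k = l
  · subst hkl
    have hS : (M.transpose * D * M) k k
        = ∑ i ∈ Finset.range (Nw + 1), (cBL N1 N2 Nw k i) ^ 2 / piBL N1 Nw N i := by
      rw [← Fin.sum_univ_eq_sum_range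
        (fun i : ℕ => (cBL N1 N2 Nw k i) ^ 2 / piBL N1 Nw N i), Matrix.mul_apply]
      refine Finset.sum_congr rfl fun i _ => ?_
      rw [hD, Matrix.mul_diagonal]
      simp only [hM, Matrix.transpose_apply, eigMat]
      ring
    have hpos : 0 < ∑ i ∈ Finset.range (Nw + 1), (cBL N1 N2 Nw k i) ^ 2 / piBL N1 Nw N i := by
      refine Finset.sum_pos' (fun i hi => ?_) ⟨0, by simp, ?_⟩
      · have := hpi ⟨i, by simpa using hi⟩
        positivity
      · rw [cBL_zero]
        have := hpi 0
        simp only [Fin.val_zero] at this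
        positivity
    rw [hS, DeltaSqBL, inv_mul_cancel₀ hpos.ne', Matrix.one_apply_eq]
  · have h := congrFun (congrFun comm k) l
    rw [hL, Matrix.diagonal_mul, Matrix.mul_diagonal] at h
    have h' : (lamBL N1 N2 N k - lamBL N1 N2 N l) * (M.transpose * D * M) k l = 0 := by
      linear_combination h
    rcases mul_eq_zero.mp h' with h0 | h0
    · exact absurd (Fin.ext (lamBL_injective N1 N2 Nw N k l hN1 hN2 hN hw1 hw2 (by omega) (by omega)
        (sub_eq_zero.mp h0))) hkl
    · rw [h0, mul_zero, Matrix.one_apply_ne hkl]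

/-- Spectral decomposition of the BL chain:
`(T^m)_{ij} = (1/π_j) Σ_k Δ_k² λ_k^m c_k(i) c_k(j)`. -/
theorem BL_spectral_decomposition
    (N1 N2 Nw Nb N : ℕ)
    (hN1 : 1 ≤ N1) (hN2 : 1 ≤ N2) (hN : N = N1 + N2) (hwb : Nw + Nb = N)
    (hw1 : Nw ≤ N1) (hw2 : Nw ≤ N2)
    (m : ℕ) (i j : Fin (Nw + 1)) :
    ((TBL N1 N2 Nw Nb) ^ m) i j
      = (1 / piBL N1 Nw N j) *
          ∑ k ∈ Finset.range (Nw + 1),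
            DeltaSqBL N1 N2 Nw N k * (lamBL N1 N2 N k) ^ m
              * cBL N1 N2 Nw k i * cBL N1 N2 Nw k j := by
  set M := eigMat N1 N2 Nw with hM
  set D := Matrix.diagonal (fun i : Fin (Nw + 1) => 1 / piBL N1 Nw N i) with hD
  set L := Matrix.diagonal (fun k : Fin (Nw + 1) => lamBL N1 N2 N k) with hL
  set S := Matrix.diagonal (fun k : Fin (Nw + 1) => DeltaSqBL N1 N2 Nw N k) with hS
  set T := TBL N1 N2 Nw Nb with hT
  have hTM : T * M = M * L := TBL_mul_eigMat N1 N2 Nw Nb N hN1 hN2 hN hwb hw2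
  have hpow : ∀ m : ℕ, T ^ m * M = M * L ^ m := by
    intro m
    induction m with
    | zero => simp
    | succ m ih => rw [pow_succ, Matrix.mul_assoc, hTM, ← Matrix.mul_assoc, ih, Matrix.mul_assoc,
        ← pow_succ]
  have horth : S * (M.transpose * D * M) = 1 :=
    eigMat_orthogonal N1 N2 Nw Nb N hN1 hN2 hN hwb hw1 hw2
  -- a one-sided inverse of a square matrix is two-sided
  have hcompl : M * (S * (M.transpose * D)) = 1 := by
    rw [mul_eq_one_comm, Matrix.mul_assoc]
    exact horth
  have hfinal : T ^ m = M * L ^ m * S * M.transpose * D := by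
    calc T ^ m = T ^ m * (M * (S * (M.transpose * D))) := by rw [hcompl, Matrix.mul_one]
      _ = T ^ m * M * S * M.transpose * D := by simp only [Matrix.mul_assoc]
      _ = _ := by rw [hpow]
  rw [hfinal, hD, Matrix.mul_diagonal, Matrix.mul_apply, mul_comm,
    ← Fin.sum_univ_eq_sum_range (fun k : ℕ => DeltaSqBL N1 N2 Nw N k * (lamBL N1 N2 N k) ^ m
      * cBL N1 N2 Nw k i * cBL N1 N2 Nw k j)]
  congr 1
  refine Finset.sum_congr rfl fun k _ => ?_
  rw [hS, Matrix.mul_diagonal, hL, Matrix.diagonal_pow, Matrix.mul_diagonal]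
  simp only [hM, Matrix.transpose_apply, eigMat, Pi.pow_apply]
  ring
end
end
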